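/- arXiv:1603.00617 — 5 statements merged into one kernel-verified Lean document; each statement's English description precedes it below -/
import Mathlib

section
/- For every u ∈ V the bilinear form A^{nn} is nonnegative on the diagonal and moreover A^{nn}(u,u) ≥ (1/2)·a(u,u). (Lemma 4.1 of the paper: the lifting-stabilized Nitsche bilinear form A^{nn} is non-negative and controls the principal bilinear form a with constant 1/2.) -/
section BilinForm

variable {V : Type*} [AddCommMonoid V]

lemma bilinForm_add_smul_self {R : Type*} [CommSemiring R] [Module R V]
    {B : LinearMap.BilinForm R V} (hB : B.IsSymm) (c : R) (u w : V) :
    B (u + c • w) (u + c • w) = B u u + 2 * c * B w u + c ^ 2 * B w w := by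
  simp only [map_add, map_smul, LinearMap.add_apply, LinearMap.smul_apply, smul_eq_mul, hB.eq u w]
  ring

variable {K : Type*} [Field K] [LinearOrder K] [IsStrictOrderedRing K] [Module K V]

lemma one_sub_inv_mul_bilinForm_self_le {B : LinearMap.BilinForm K V} (hB : B.IsPosSemidef)
    {γ : K} (hγ : 0 < γ) (u w : V) :
    (1 - γ⁻¹) * B u u ≤ B u u + 2 * B w u + γ * B w w :=
  calc (1 - γ⁻¹) * B u u
      ≤ (1 - γ⁻¹) * B u u + γ⁻¹ * B (u + γ • w) (u + γ • w) :=
        le_add_of_nonneg_right (mul_nonneg (inv_nonneg.2 hγ.le) (hB.nonneg _))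
    _ = B u u + 2 * B w u + γ * B w w := by
        rw [bilinForm_add_smul_self hB.isSymm]
        field_simp
        ring

theorem lifting_stabilized_form_nonneg_general
    {a : LinearMap.BilinForm K V} (ha : a.IsPosSemidef) {L : V → V}
    {Nc : V → V → K} (hNc : ∀ u v, Nc u v = a (L v) u)
    {Ann : V → V → K}
    (hAnn : ∀ u v, Ann u v = a u v + Nc u v + Nc v u + 2 * a (L u) (L v)) (u : V) :
    0 ≤ Ann u u ∧ (1 / 2) * a u u ≤ Ann u u := by
  have control : (1 / 2) * a u u ≤ Ann u u :=
    calc (1 / 2) * a u u = (1 - 2⁻¹) * a u u := by norm_num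
      _ ≤ a u u + 2 * a (L u) u + 2 * a (L u) (L u) :=
        one_sub_inv_mul_bilinForm_self_le ha two_pos u (L u)
      _ = Ann u u := by rw [hAnn, hNc]; ring
  exact ⟨(mul_nonneg one_half_pos.le (ha.nonneg u)).trans control, control⟩

end BilinForm

/-- Lemma 4.1 of the paper: with `N^c(u,v) := a(L v, u)` and
`A^{nn}(u,v) := a(u,v) + N^c(u,v) + N^c(v,u) + 2·a(L u, L v)`,
the form `A^{nn}` is non-negative on the diagonal and satisfies
`A^{nn}(u,u) ≥ (1/2)·a(u,u)`. -/
theorem lifting_stabilized_form_nonneg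
    {V : Type*} [AddCommGroup V] [Module ℝ V]
    (a : V →ₗ[ℝ] V →ₗ[ℝ] ℝ)
    (hsymm : ∀ u v : V, a u v = a v u)
    (hpos : ∀ u : V, 0 ≤ a u u)
    (L : V →ₗ[ℝ] V)
    (Nc : V → V → ℝ) (hNc : ∀ u v : V, Nc u v = a (L v) u)
    (Ann : V → V → ℝ)
    (hAnn : ∀ u v : V, Ann u v = a u v + Nc u v + Nc v u + 2 * a (L u) (L v))
    (u : V) :
    0 ≤ Ann u u ∧ (1 / 2) * a u u ≤ Ann u u :=
  lifting_stabilized_form_nonneg_general (a := a) ⟨⟨hsymm⟩, ⟨hpos⟩⟩ hNc hAnn u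
end

section
/- For every u ∈ V one has A*(u,u) ≥ (1/4)·(a(u,u) + 2·a(L(u),L(u)) + s(u,u)) = (1/4)·|||u||_A². In particular the parameter-free Nitsche bilinear form A* is coercive on V with respect to the energy norm |||·||_A, with a coercivity constant independent of any stabilization parameter. (Corollary 4.2 of the paper, coercivity of the modified formulation.) -/
/-!
On the diagonal the two consistency terms add up to `2 * a (L u) u`. Expanding
`0 ≤ a (ε • u + L u) (ε • u + L u)` gives the Young inequality
`-2 * a (L u) u ≤ ε * a u u + ε⁻¹ * a (L u) (L u)`. With `ε = 1 - c` this leaves `c * a u u` of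
the first term of `A*`, and it leaves `2 * c * a (L u) (L u)` of the lifting term as soon as
`(1 - c)⁻¹ ≤ 2 * (1 - c)`. Over `ℝ` this allows every `c ≤ 1 - √2 / 2 ≈ 0.29`, in particular
`c = 1 / 4`.
-/

section

variable {K V : Type*} [Field K] [LinearOrder K] [IsStrictOrderedRing K]
  [AddCommGroup V] [Module K V] {B : LinearMap.BilinForm K V}

lemma neg_apply_add_apply_le_mul_add_inv_mul (hB : B.IsNonneg) {ε : K} (hε : 0 < ε) (x y : V) :
    -(B x y + B y x) ≤ ε * B x x + ε⁻¹ * B y y := by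
  have expand : B (ε • x + y) (ε • x + y) = ε * (ε * B x x + (B x y + B y x)) + B y y := by
    simp only [map_add, map_smul, LinearMap.add_apply, LinearMap.smul_apply, smul_eq_mul]
    ring
  have scaled : 0 ≤ ε⁻¹ * B (ε • x + y) (ε • x + y) :=
    mul_nonneg (inv_nonneg.2 hε.le) (hB.nonneg _)
  rw [expand, mul_add, inv_mul_cancel_left₀ hε.ne'] at scaled
  linarith

lemma mul_add_two_mul_apply_le (hB : B.IsPosSemidef) {c : K} (hc : c < 1)
    (hc_sq : 1 ≤ 2 * (1 - c) ^ 2) (x y : V) :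
    c * (B x x + 2 * B y y) ≤ B x x + 2 * B y x + 2 * B y y := by
  have weight_pos : 0 < 1 - c := sub_pos.2 hc
  have inv_weight_le : (1 - c)⁻¹ ≤ 2 * (1 - c) := by
    rw [inv_le_iff_one_le_mul₀ weight_pos]
    linarith
  have young : -(2 * B y x) ≤ (1 - c) * B x x + 2 * (1 - c) * B y y :=
    calc -(2 * B y x) = -(B x y + B y x) := by rw [hB.isSymm.eq x y, two_mul]
      _ ≤ (1 - c) * B x x + (1 - c)⁻¹ * B y y :=
        neg_apply_add_apply_le_mul_add_inv_mul hB.isNonneg weight_pos x y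
      _ ≤ (1 - c) * B x x + 2 * (1 - c) * B y y := by
        gcongr
        exact hB.isNonneg.nonneg y
  linarith

theorem lifting_stabilized_form_coercive_general
    {a : LinearMap.BilinForm K V} (ha : a.IsPosSemidef)
    {s : V → V → K} (hs : ∀ u, 0 ≤ s u u) {L : V → V}
    {Nc : V → V → K} (hNc : ∀ u v, Nc u v = a (L v) u)
    {Astar : V → V → K}
    (hAstar : ∀ u v, Astar u v = a u v + Nc u v + Nc v u + 2 * a (L u) (L v) + s u v)
    {c : K} (hc : c < 1) (hc_sq : 1 ≤ 2 * (1 - c) ^ 2) (u : V) :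
    c * (a u u + 2 * a (L u) (L u) + s u u) ≤ Astar u u :=
  calc c * (a u u + 2 * a (L u) (L u) + s u u)
      = c * (a u u + 2 * a (L u) (L u)) + c * s u u := mul_add ..
    _ ≤ (a u u + 2 * a (L u) u + 2 * a (L u) (L u)) + s u u :=
      add_le_add (mul_add_two_mul_apply_le ha hc hc_sq u (L u))
        (mul_le_of_le_one_left (hs u) hc.le)
    _ = Astar u u := by rw [hAstar, hNc]; ring

end

/-- Corollary 4.2 of the paper: the parameter-free Nitsche bilinear form
`A*(u,v) := a(u,v) + N^c(u,v) + N^c(v,u) + 2·a(L u, L v) + s(u,v)` satisfies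
`A*(u,u) ≥ (1/4)·(a(u,u) + 2·a(L u, L u) + s(u,u)) = (1/4)·|||u||_A²`. -/
theorem lifting_stabilized_form_coercive
    {V : Type*} [AddCommGroup V] [Module ℝ V]
    (a : V →ₗ[ℝ] V →ₗ[ℝ] ℝ)
    (hasymm : ∀ u v : V, a u v = a v u)
    (hapos : ∀ u : V, 0 ≤ a u u)
    (s : V →ₗ[ℝ] V →ₗ[ℝ] ℝ)
    (hssymm : ∀ u v : V, s u v = s v u)
    (hspos : ∀ u : V, 0 ≤ s u u)
    (L : V →ₗ[ℝ] V)
    (Nc : V → V → ℝ) (hNc : ∀ u v : V, Nc u v = a (L v) u)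
    (Astar : V → V → ℝ)
    (hAstar : ∀ u v : V,
      Astar u v = a u v + Nc u v + Nc v u + 2 * a (L u) (L v) + s u v)
    (u : V) :
    (1 / 4) * (a u u + 2 * a (L u) (L u) + s u u) ≤ Astar u u :=
  lifting_stabilized_form_coercive_general ⟨⟨hasymm⟩, ⟨hapos⟩⟩ hspos hNc hAstar
    (by norm_num) (by norm_num) u
end

section
/- For every λ ≥ 1 the classical Nitsche bilinear form A_λ(u,v) := a(u,v) + N^c(u,v) + N^c(v,u) + λ·s(u,v) satisfies the continuity estimate |A_λ(u,v)| ≤ 2·|||u|||_λ·|||v|||_λ for all u, v ∈ V, where |||u|||_λ² := a(u,u) + b(u,u) + λ·s(u,u). (Condition (C) of the paper for the classical Nitsche formulation.) -/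
/-!
Let `α = √a(u,u)`, `β = √b(u,u)`, `σ = √(λ s(u,u))`, and let `α'`, `β'`, `σ'` be the same quantities
for `v`. Cauchy–Schwarz for `a` and `λ s`, together with the bound on `N^c` and `s ≤ λ s`, gives
`|A_λ(u,v)| ≤ αα' + βσ' + σβ' + σσ'`. The right-hand side is the bilinear form of the symmetric
matrix `1 ⊕ !![0, 1; 1, 1]` at `(α, β, σ)` and `(α', β', σ')`. The eigenvalues of the second block
are the golden ratio `φ` and its conjugate, so this is at most `φ * |||u|||_λ * |||v|||_λ`, and
`φ < 2`.
-/

open scoped goldenRatio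

lemma sq_add_add_sq_le_goldenRatio_sq_mul (x y : ℝ) :
    y ^ 2 + (x + y) ^ 2 ≤ φ ^ 2 * (x ^ 2 + y ^ 2) := by
  have gap : φ * (φ ^ 2 * (x ^ 2 + y ^ 2) - (y ^ 2 + (x + y) ^ 2)) = (φ * x - y) ^ 2 := by
    linear_combination (φ * (x ^ 2 + y ^ 2) + y ^ 2) * Real.goldenRatio_sq
  have := nonneg_of_mul_nonneg_right (gap ▸ sq_nonneg (φ * x - y)) Real.goldenRatio_pos
  linarith

lemma mul_add_mul_add_mul_le_sqrt_mul_sqrt (x y z x' y' z' : ℝ) :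
    x * x' + y * y' + z * z' ≤ √(x ^ 2 + y ^ 2 + z ^ 2) * √(x' ^ 2 + y' ^ 2 + z' ^ 2) := by
  simpa [Fin.sum_univ_three] using
    Real.sum_mul_le_sqrt_mul_sqrt Finset.univ ![x, y, z] ![x', y', z']

lemma mul_add_mul_add_mul_add_mul_le_goldenRatio_mul (α β σ α' β' σ' : ℝ) :
    α * α' + β * σ' + σ * β' + σ * σ' ≤
      φ * √(α ^ 2 + β ^ 2 + σ ^ 2) * √(α' ^ 2 + β' ^ 2 + σ' ^ 2) := by
  have hα : α ^ 2 ≤ φ ^ 2 * α ^ 2 :=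
    le_mul_of_one_le_left (sq_nonneg α) (one_le_pow₀ Real.one_lt_goldenRatio.le)
  calc α * α' + β * σ' + σ * β' + σ * σ'
      = α * α' + σ * β' + (β + σ) * σ' := by ring
    _ ≤ √(α ^ 2 + σ ^ 2 + (β + σ) ^ 2) * √(α' ^ 2 + β' ^ 2 + σ' ^ 2) :=
        mul_add_mul_add_mul_le_sqrt_mul_sqrt ..
    _ ≤ √(φ ^ 2 * (α ^ 2 + β ^ 2 + σ ^ 2)) * √(α' ^ 2 + β' ^ 2 + σ' ^ 2) := by
        gcongr
        linarith [sq_add_add_sq_le_goldenRatio_sq_mul β σ]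
    _ = φ * √(α ^ 2 + β ^ 2 + σ ^ 2) * √(α' ^ 2 + β' ^ 2 + σ' ^ 2) := by
        rw [Real.sqrt_mul (sq_nonneg φ), Real.sqrt_sq Real.goldenRatio_pos.le]

section Nitsche

variable {V : Type*} [AddCommGroup V] [Module ℝ V]

lemma abs_apply_le_sqrt_mul_sqrt {B : LinearMap.BilinForm ℝ V} (hB : B.IsPosSemidef) (u v : V) :
    |B u v| ≤ √(B u u) * √(B v v) := by
  rw [← Real.sqrt_mul (hB.nonneg u)]
  have hsymm : LinearMap.IsSymm B := LinearMap.BilinForm.isSymm_iff.mp hB.isSymm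
  exact Real.abs_le_sqrt (B.apply_sq_le_of_symm hB.nonneg hsymm u v)

/-- The classical Nitsche form `A_λ` with principal form `a`, penalty form `s` and consistency term
`N`. The latter is only a function of two variables, not necessarily bilinear. -/
def nitscheForm (a s : LinearMap.BilinForm ℝ V) (N : V → V → ℝ) (lam : ℝ) (u v : V) : ℝ :=
  a u v + N u v + N v u + lam * s u v

/-- The energy norm `|||u|||_λ` in which the Nitsche form is bounded. The function `b` stands for
the boundary-flux term `u ↦ b(u,u)`. -/
noncomputable def nitscheNorm (a s : LinearMap.BilinForm ℝ V) (b : V → ℝ) (lam : ℝ) (u : V) : ℝ :=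
  √(a u u + b u + lam * s u u)

theorem classical_nitsche_continuity_general {a s : LinearMap.BilinForm ℝ V}
    (ha : a.IsPosSemidef) (hs : s.IsPosSemidef) {b : V → ℝ} (hb : ∀ u, 0 ≤ b u)
    {N : V → V → ℝ} (hN : ∀ u v, N u v ^ 2 ≤ b u * s v v) {lam : ℝ} (hlam : 1 ≤ lam) (u v : V) :
    |nitscheForm a s N lam u v| ≤ φ * nitscheNorm a s b lam u * nitscheNorm a s b lam v := by
  have hs' : (lam • s).IsPosSemidef := hs.smul (zero_le_one.trans hlam)
  have abs_N_le (w z : V) : |N w z| ≤ √(b w) * √(lam * s z z) := by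
    rw [← Real.sqrt_mul (hb w)]
    exact Real.abs_le_sqrt <| (hN w z).trans <|
      mul_le_mul_of_nonneg_left (le_mul_of_one_le_left (hs.nonneg z) hlam) (hb w)
  have nitscheNorm_eq (w : V) : nitscheNorm a s b lam w =
      √(√(a w w) ^ 2 + √(b w) ^ 2 + √(lam * s w w) ^ 2) := by
    have hsw : 0 ≤ lam * s w w := hs'.nonneg w
    rw [nitscheNorm, Real.sq_sqrt (ha.nonneg w), Real.sq_sqrt (hb w), Real.sq_sqrt hsw]
  calc |nitscheForm a s N lam u v|
      ≤ |a u v| + |N u v| + |N v u| + |lam * s u v| :=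
        norm_add₄_le (a := a u v) (b := N u v) (c := N v u) (d := lam * s u v)
    _ ≤ √(a u u) * √(a v v) + √(b u) * √(lam * s v v) + √(b v) * √(lam * s u u) +
          √(lam * s u u) * √(lam * s v v) := by
        gcongr
        exacts [abs_apply_le_sqrt_mul_sqrt ha u v, abs_N_le u v, abs_N_le v u,
          abs_apply_le_sqrt_mul_sqrt hs' u v]
    _ ≤ φ * nitscheNorm a s b lam u * nitscheNorm a s b lam v := by
        rw [nitscheNorm_eq, nitscheNorm_eq, mul_comm √(b v)]
        exact mul_add_mul_add_mul_add_mul_le_goldenRatio_mul ..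

end Nitsche

/-- Condition (C) of the paper for the classical Nitsche formulation: for
`λ ≥ 1` the form `A_λ` satisfies `|A_λ(u,v)| ≤ 2·|||u|||_λ·|||v|||_λ`, where
`|||u|||_λ² := a(u,u) + b(u,u) + λ·s(u,u)`. -/
theorem classical_nitsche_continuity
    {V : Type*} [AddCommGroup V] [Module ℝ V]
    (a s b : V →ₗ[ℝ] V →ₗ[ℝ] ℝ)
    (hasymm : ∀ u v : V, a u v = a v u) (hapos : ∀ u : V, 0 ≤ a u u)
    (hssymm : ∀ u v : V, s u v = s v u) (hspos : ∀ u : V, 0 ≤ s u u)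
    (hbsymm : ∀ u v : V, b u v = b v u) (hbpos : ∀ u : V, 0 ≤ b u u)
    (Nc : V →ₗ[ℝ] V →ₗ[ℝ] ℝ)
    (hNcbound : ∀ u v : V, (Nc u v) ^ 2 ≤ b u u * s v v)
    (lam : ℝ) (hlam : 1 ≤ lam)
    (Alam : V → V → ℝ)
    (hAlam : ∀ u v : V, Alam u v = a u v + Nc u v + Nc v u + lam * s u v) :
    ∀ u v : V,
      |Alam u v| ≤ 2 * Real.sqrt (a u u + b u u + lam * s u u) *
        Real.sqrt (a v v + b v v + lam * s v v) := by
  intro u v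
  rw [hAlam]
  refine (classical_nitsche_continuity_general (b := fun w => b w w) (N := (Nc · ·))
    ⟨⟨hasymm⟩, ⟨hapos⟩⟩ ⟨⟨hssymm⟩, ⟨hspos⟩⟩ hbpos hNcbound hlam u v).trans ?_
  unfold nitscheNorm
  gcongr
  exact Real.goldenRatio_lt_two.le
end

section
/- For every linear functional F on V there exists a unique w ∈ V such that a(w,v) + k(w,v) = F(v) for all v ∈ V. (Unique solvability of the regularized element-local lifting problem (eq:local) of the paper.) -/
/-!
The regularization `k(w,v) = c·l(w)·l(v)` is positive semidefinite, and its null vectors are those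
of `ker l`. As `l(e) ≠ 0`, the line spanned by `e` meets `ker l` only in `0`, so `a` and `k` have no
common nonzero null vector. A sum of two semidefinite forms vanishes only where both do, hence
`a + k` is anisotropic, so it identifies `V` with its dual.
-/

open LinearMap (BilinForm)

theorem anisotropic_add_of_nonneg {R M N : Type*} [CommSemiring R] [AddCommMonoid M] [Module R M]
    [AddCommMonoid N] [PartialOrder N] [IsOrderedAddMonoid N] [Module R N]
    {Q₁ Q₂ : QuadraticMap R M N} (h₁ : ∀ x, 0 ≤ Q₁ x) (h₂ : ∀ x, 0 ≤ Q₂ x)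
    (h : ∀ x, Q₁ x = 0 → Q₂ x = 0 → x = 0) : (Q₁ + Q₂).Anisotropic := fun x hx =>
  have ⟨hx₁, hx₂⟩ := (add_eq_zero_iff_of_nonneg (h₁ x) (h₂ x)).mp hx
  h x hx₁ hx₂

theorem nondegenerate_of_anisotropic {R M : Type*} [CommSemiring R] [AddCommMonoid M]
    [Module R M] {B : BilinForm R M} (hB : B.toQuadraticMap.Anisotropic) : B.Nondegenerate :=
  ⟨BilinForm.separatingLeft_of_anisotropic hB, fun x hx => hB x (hx x)⟩

theorem existsUnique_forall_apply_eq_of_nondegenerate {K V : Type*} [Field K] [AddCommGroup V]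
    [Module K V] [FiniteDimensional K V] {B : BilinForm K V} (hB : B.Nondegenerate)
    (F : Module.Dual K V) : ∃! w, ∀ v, B w v = F v := by
  simpa only [LinearMap.ext_iff, BilinForm.toDual_def] using
    (B.toDual hB).bijective.existsUnique F

theorem regularized_lifting_unique_solvability_general
    {K V : Type*} [Field K] [LinearOrder K] [IsStrictOrderedRing K]
    [AddCommGroup V] [Module K V] [FiniteDimensional K V]
    (a : BilinForm K V) (hpos : ∀ u, 0 ≤ a u u)
    (e : V) (hker : ∀ v, a v v = 0 → ∃ t : K, v = t • e)
    (l : Module.Dual K V) (hle : l e ≠ 0)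
    (c : K) (hc : 0 < c) (F : Module.Dual K V) :
    ∃! w, ∀ v, a w v + c * l w * l v = F v := by
  let k : BilinForm K V := BilinForm.linMulLin (c • l) l
  have hk_diag (v : V) : k v v = c * (l v * l v) := mul_assoc c (l v) (l v)
  have hk_nonneg (v : V) : 0 ≤ k v v := by
    rw [hk_diag]
    exact mul_nonneg hc.le (mul_self_nonneg (l v))
  have hnull (v : V) (hav : a v v = 0) (hkv : k v v = 0) : v = 0 := by
    have hlv : l v = 0 := by simpa only [hk_diag, mul_eq_zero, hc.ne', false_or, or_self] using hkv
    obtain ⟨t, rfl⟩ := hker v hav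
    have ht : t = 0 := by simpa only [map_smul, smul_eq_mul, mul_eq_zero, hle, or_false] using hlv
    rw [ht, zero_smul]
  have haniso : (a + k).toQuadraticMap.Anisotropic := by
    rw [LinearMap.BilinMap.toQuadraticMap_add]
    exact anisotropic_add_of_nonneg hpos hk_nonneg hnull
  exact existsUnique_forall_apply_eq_of_nondegenerate (nondegenerate_of_anisotropic haniso) F

/-- Unique solvability of the regularized element-local lifting problem
(eq:local) of the paper: for every linear functional `F` there is a unique `w`
with `a(w,v) + c·ℓ(w)·ℓ(v) = F(v)` for all `v`. -/
theorem regularized_lifting_unique_solvability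
    {V : Type*} [AddCommGroup V] [Module ℝ V] [FiniteDimensional ℝ V]
    (a : V →ₗ[ℝ] V →ₗ[ℝ] ℝ)
    (hsymm : ∀ u v : V, a u v = a v u)
    (hpos : ∀ u : V, 0 ≤ a u u)
    (e : V)
    (hker : ∀ v : V, a v v = 0 → ∃ t : ℝ, v = t • e)
    (l : V →ₗ[ℝ] ℝ) (hle : l e ≠ 0)
    (c : ℝ) (hc : 0 < c)
    (F : V →ₗ[ℝ] ℝ) :
    ∃! w : V, ∀ v : V, a w v + c * l w * l v = F v :=
  regularized_lifting_unique_solvability_general a hpos e hker l hle c hc F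
end

section
/- Suppose u ∈ V and u_h ∈ S satisfy the Galerkin orthogonality A*(u − u_h, v) = 0 for all v ∈ S. Then |||u − u_h||| ≤ (1 + 4·(4 + 2·c_tr)·(1 + c_tr)) · |||u − v_h||| for every v_h ∈ S. (Quasi-optimality of the parameter-free (lifting-stabilized) symmetric Nitsche formulation: the error bound holds with a constant depending only on the trace inverse constant c_tr, and no stabilization parameter λ appears.) -/
/-!
The lifting-stabilized Nitsche form is bounded on `V` and coercive on `S` for the energy seminorm
`|||·|||`, so quasi-optimality is an instance of Céa's lemma. Coercivity needs no penalty parameter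
because the lifting term completes the square:
`2 A*(w, w) = a(w, w) + a(w + 2 L w, w + 2 L w) + 2 s(w, w)`. On `S` the trace inequality lets
`a(w, w)` absorb `b(w, w)`. Boundedness is Cauchy–Schwarz applied to each term of `A*`.
-/

open LinearMap (BilinForm)

section Cea

variable {𝕜 V : Type*} [NormedField 𝕜] [AddCommGroup V] [Module 𝕜 V] {σ : 𝕜 →+* 𝕜}
  (p : Seminorm 𝕜 V) (B : V →ₛₗ[σ] V →ₗ[𝕜] 𝕜) {C M : ℝ}

theorem seminorm_le_of_coercive_of_bounded (hC : 0 ≤ C) (hM : 0 ≤ M) {e w : V}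
    (hcoercive : p w ^ 2 ≤ C * ‖B w w‖) (hbounded : ‖B e w‖ ≤ M * (p e * p w))
    (horth : B (e + w) w = 0) : p w ≤ C * M * p e := by
  have hneg : B w w = -B e w := by
    rwa [map_add, LinearMap.add_apply, add_comm, ← eq_neg_iff_add_eq_zero] at horth
  have hsq : p w * p w ≤ C * M * p e * p w :=
    calc p w * p w = p w ^ 2 := (sq _).symm
      _ ≤ C * ‖B e w‖ := by rwa [hneg, norm_neg] at hcoercive
      _ ≤ C * (M * (p e * p w)) := by gcongr
      _ = C * M * p e * p w := by ring
  rcases (apply_nonneg p w).eq_or_lt with hzero | hpos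
  · rw [← hzero]
    positivity
  · exact le_of_mul_le_mul_right hsq hpos

/-- **Céa's lemma** for a seminorm. -/
theorem cea_seminorm_sub_le (hC : 0 ≤ C) (hM : 0 ≤ M) {S : Submodule 𝕜 V}
    (hcoercive : ∀ w ∈ S, p w ^ 2 ≤ C * ‖B w w‖)
    (hbounded : ∀ e, ∀ w ∈ S, ‖B e w‖ ≤ M * (p e * p w))
    {u uh : V} (huh : uh ∈ S) (hgal : ∀ v ∈ S, B (u - uh) v = 0) {vh : V} (hvh : vh ∈ S) :
    p (u - uh) ≤ (1 + C * M) * p (u - vh) := by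
  have hsplit : (u - vh) + (vh - uh) = u - uh := sub_add_sub_cancel _ _ _
  have hmem : vh - uh ∈ S := S.sub_mem hvh huh
  have hdiscrete : p (vh - uh) ≤ C * M * p (u - vh) :=
    seminorm_le_of_coercive_of_bounded p B hC hM (hcoercive _ hmem) (hbounded _ _ hmem)
      (by rw [hsplit, hgal _ hmem])
  calc p (u - uh) ≤ p (u - vh) + p (vh - uh) := hsplit ▸ map_add_le_add p _ _
    _ ≤ p (u - vh) + C * M * p (u - vh) := by gcongr
    _ = (1 + C * M) * p (u - vh) := by ring

end Cea

section FormSeminorm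

variable {V W : Type*} [AddCommGroup V] [Module ℝ V] [AddCommGroup W] [Module ℝ W]
  {q : BilinForm ℝ V} {r : BilinForm ℝ W}

/-- The seminorm `x ↦ √(q x x)` of a positive semidefinite form `q`, obtained from the
pre-inner product structure that `q` defines. -/
noncomputable def formSeminorm (hq : q.IsPosSemidef) : Seminorm ℝ V :=
  letI : PreInnerProductSpace.Core ℝ V :=
    { inner := fun x y ↦ q x y
      conj_inner_symm := fun x y ↦ hq.eq y x
      re_inner_nonneg := hq.nonneg
      add_left := fun x y z ↦ by rw [map_add, LinearMap.add_apply]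
      smul_left := fun x y c ↦ by rw [map_smul]; rfl }
  letI := InnerProductSpace.Core.toSeminormedAddCommGroup (𝕜 := ℝ) (F := V)
  letI : NormedSpace ℝ V := InnerProductSpace.Core.toNormedSpace (𝕜 := ℝ) (F := V)
  normSeminorm ℝ V

theorem formSeminorm_apply (hq : q.IsPosSemidef) (x : V) : formSeminorm hq x = √(q x x) := rfl

theorem formSeminorm_sq (hq : q.IsPosSemidef) (x : V) : formSeminorm hq x ^ 2 = q x x := by
  rw [formSeminorm_apply, Real.sq_sqrt (hq.nonneg x)]

theorem formSeminorm_le_formSeminorm (hq : q.IsPosSemidef) (hr : r.IsPosSemidef) {x : V} {y : W}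
    (h : q x x ≤ r y y) : formSeminorm hq x ≤ formSeminorm hr y :=
  Real.sqrt_le_sqrt h

theorem abs_le_formSeminorm_mul (hq : q.IsPosSemidef) (hr : r.IsPosSemidef) {t : ℝ} {x : V}
    {y : W} (h : t ^ 2 ≤ q x x * r y y) : |t| ≤ formSeminorm hq x * formSeminorm hr y := by
  rw [formSeminorm_apply, formSeminorm_apply, ← Real.sqrt_mul (hq.nonneg x)]
  exact Real.abs_le_sqrt h

theorem abs_apply_le_formSeminorm_mul (hq : q.IsPosSemidef) (x y : V) :
    |q x y| ≤ formSeminorm hq x * formSeminorm hq y :=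
  abs_le_formSeminorm_mul hq hq <|
    q.apply_sq_le_of_symm hq.nonneg (LinearMap.BilinForm.isSymm_iff.1 hq.isSymm) x y

theorem abs_apply_map_map_le_formSeminorm_mul (hq : q.IsPosSemidef)
    (hr : r.IsPosSemidef) {f : W → V} {c : ℝ} (hc : 0 ≤ c)
    (hf : ∀ w, q (f w) (f w) ≤ c * r w w) (x y : W) :
    |q (f x) (f y)| ≤ c * (formSeminorm hr x * formSeminorm hr y) := by
  have hbound (w : W) : formSeminorm hq (f w) ≤ √c * formSeminorm hr w := by
    rw [formSeminorm_apply, formSeminorm_apply, ← Real.sqrt_mul hc]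
    exact Real.sqrt_le_sqrt (hf w)
  calc |q (f x) (f y)| ≤ formSeminorm hq (f x) * formSeminorm hq (f y) :=
        abs_apply_le_formSeminorm_mul hq _ _
    _ ≤ (√c * formSeminorm hr x) * (√c * formSeminorm hr y) := by gcongr <;> apply hbound
    _ = c * (formSeminorm hr x * formSeminorm hr y) := by
      rw [mul_mul_mul_comm, Real.mul_self_sqrt hc]

end FormSeminorm

section LiftedNitscheForm

variable {R V : Type*} [CommRing R] [AddCommGroup V] [Module R V]

/-- The lifting-stabilized symmetric Nitsche form
`A*(u, v) = a(u, v) + Nᶜ(u, v) + Nᶜ(v, u) + 2 a(L u, L v) + s(u, v)`, where `L` is the lifting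
operator and `Nᶜ(u, v) = a(L v, u)`. -/
def liftedNitscheForm (a s : BilinForm R V) (L : V →ₗ[R] V) : BilinForm R V :=
  a + (a ∘ₗ L).flip + a ∘ₗ L + (2 : R) • a.compl₁₂ L L + s

theorem liftedNitscheForm_apply (a s : BilinForm R V) (L : V →ₗ[R] V) (u v : V) :
    liftedNitscheForm a s L u v = a u v + a (L v) u + a (L u) v + 2 * a (L u) (L v) + s u v :=
  rfl

theorem two_mul_liftedNitscheForm_self {a : BilinForm R V} (ha : a.IsSymm) (s : BilinForm R V)
    (L : V →ₗ[R] V) (w : V) :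
    2 * liftedNitscheForm a s L w w =
      a w w + a (w + (2 : R) • L w) (w + (2 : R) • L w) + 2 * s w w := by
  simp only [liftedNitscheForm_apply, map_add, map_smul, LinearMap.add_apply,
    LinearMap.smul_apply, smul_eq_mul, ha.eq w (L w)]
  ring

theorem add_add_apply_self_le_liftedNitscheForm [LinearOrder R] [IsStrictOrderedRing R]
    {a s : BilinForm R V} (ha : a.IsPosSemidef) (hs : s.IsNonneg) (b : BilinForm R V)
    (L : V →ₗ[R] V) {c : R} (hc : 0 ≤ c) {w : V} (htrace : b w w ≤ c * a w w) :
    (a + b + s) w w ≤ 2 * (1 + c) * liftedNitscheForm a s L w w := by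
  have hcoercive : a w w + s w w ≤ 2 * liftedNitscheForm a s L w w := by
    rw [two_mul_liftedNitscheForm_self ha.isSymm]
    linarith [ha.nonneg (w + (2 : R) • L w), hs.nonneg w]
  calc (a + b + s) w w = a w w + b w w + s w w := rfl
    _ ≤ (1 + c) * (a w w + s w w) := by linarith [mul_nonneg hc (hs.nonneg w)]
    _ ≤ (1 + c) * (2 * liftedNitscheForm a s L w w) := by gcongr
    _ = 2 * (1 + c) * liftedNitscheForm a s L w w := by ring

end LiftedNitscheForm

theorem abs_liftedNitscheForm_le {V : Type*} [AddCommGroup V] [Module ℝ V] {a b s : BilinForm ℝ V}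
    (ha : a.IsPosSemidef) (hb : b.IsPosSemidef) (hs : s.IsPosSemidef) (L : V →ₗ[ℝ] V) {c : ℝ}
    (hc : 0 ≤ c) (hconsistency : ∀ u v, a (L v) u ^ 2 ≤ b u u * s v v)
    (hlift : ∀ w, a (L w) (L w) ≤ c * s w w) (u v : V) :
    |liftedNitscheForm a s L u v| ≤
      (4 + 2 * c) * (formSeminorm ((ha.add hb).add hs) u *
        formSeminorm ((ha.add hb).add hs) v) := by
  set E := formSeminorm ((ha.add hb).add hs)
  have energy_eq (x : V) : (a + b + s) x x = a x x + b x x + s x x := rfl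
  have ha_le (x : V) : formSeminorm ha x ≤ E x :=
    formSeminorm_le_formSeminorm _ _ (by linarith [energy_eq x, hb.nonneg x, hs.nonneg x])
  have hb_le (x : V) : formSeminorm hb x ≤ E x :=
    formSeminorm_le_formSeminorm _ _ (by linarith [energy_eq x, ha.nonneg x, hs.nonneg x])
  have hs_le (x : V) : formSeminorm hs x ≤ E x :=
    formSeminorm_le_formSeminorm _ _ (by linarith [energy_eq x, ha.nonneg x, hb.nonneg x])
  have bound_a : |a u v| ≤ E u * E v :=
    (abs_apply_le_formSeminorm_mul ha u v).trans (by gcongr <;> apply ha_le)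
  have bound_s : |s u v| ≤ E u * E v :=
    (abs_apply_le_formSeminorm_mul hs u v).trans (by gcongr <;> apply hs_le)
  have bound_consistency (x y : V) : |a (L y) x| ≤ E x * E y :=
    (abs_le_formSeminorm_mul hb hs (hconsistency x y)).trans
      (by gcongr; exacts [hb_le x, hs_le y])
  have bound_lift : |a (L u) (L v)| ≤ c * (E u * E v) :=
    (abs_apply_map_map_le_formSeminorm_mul ha hs hc hlift u v).trans
      (by gcongr <;> apply hs_le)
  calc |liftedNitscheForm a s L u v|
      ≤ |a u v| + |a (L v) u| + |a (L u) v| + |2 * a (L u) (L v)| + |s u v| := by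
        rw [liftedNitscheForm_apply]
        grw [abs_add_le, abs_add_le, abs_add_le, abs_add_le]
    _ = |a u v| + |a (L v) u| + |a (L u) v| + 2 * |a (L u) (L v)| + |s u v| := by
        rw [abs_mul, abs_two]
    _ ≤ E u * E v + E u * E v + E v * E u + 2 * (c * (E u * E v)) + E u * E v := by
        gcongr
        exacts [bound_consistency u v, bound_consistency v u]
    _ = (4 + 2 * c) * (E u * E v) := by ring

/-- Quasi-optimality of the parameter-free (lifting-stabilized) symmetric
Nitsche formulation: Galerkin orthogonality for `A*` implies
`|||u − u_h||| ≤ (1 + 4·(4 + 2·c_tr)·(1 + c_tr)) · |||u − v_h|||`,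
with a constant depending only on the trace inverse constant `c_tr`. -/
theorem modified_nitsche_quasi_optimality
    {V : Type*} [AddCommGroup V] [Module ℝ V]
    (S : Submodule ℝ V)
    (a s b : V →ₗ[ℝ] V →ₗ[ℝ] ℝ)
    (hasymm : ∀ u v : V, a u v = a v u) (hapos : ∀ u : V, 0 ≤ a u u)
    (hssymm : ∀ u v : V, s u v = s v u) (hspos : ∀ u : V, 0 ≤ s u u)
    (hbsymm : ∀ u v : V, b u v = b v u) (hbpos : ∀ u : V, 0 ≤ b u u)
    (L : V →ₗ[ℝ] V)
    (Nc : V → V → ℝ) (hNc : ∀ u v : V, Nc u v = a (L v) u)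
    (ctr : ℝ) (hctr : 0 < ctr)
    (hNcbound : ∀ u v : V, (Nc u v) ^ 2 ≤ b u u * s v v)
    (hlift : ∀ w : V, a (L w) (L w) ≤ ctr * s w w)
    (htrace : ∀ v ∈ S, b v v ≤ ctr * a v v)
    (Astar : V → V → ℝ)
    (hAstar : ∀ u v : V,
      Astar u v = a u v + Nc u v + Nc v u + 2 * a (L u) (L v) + s u v)
    (u uh : V) (huh : uh ∈ S)
    (hgal : ∀ v ∈ S, Astar (u - uh) v = 0)
    (vh : V) (hvh : vh ∈ S) :
    Real.sqrt (a (u - uh) (u - uh) + b (u - uh) (u - uh) + s (u - uh) (u - uh))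
      ≤ (1 + 4 * (4 + 2 * ctr) * (1 + ctr)) *
        Real.sqrt (a (u - vh) (u - vh) + b (u - vh) (u - vh) +
          s (u - vh) (u - vh)) := by
  have ha : BilinForm.IsPosSemidef a := { eq := hasymm, nonneg := hapos }
  have hb : BilinForm.IsPosSemidef b := { eq := hbsymm, nonneg := hbpos }
  have hs : BilinForm.IsPosSemidef s := { eq := hssymm, nonneg := hspos }
  have hform (x y : V) : Astar x y = liftedNitscheForm a s L x y := by
    rw [hAstar, hNc, hNc, liftedNitscheForm_apply]
  simp only [hNc] at hNcbound
  simp only [hform] at hgal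
  set E := formSeminorm ((ha.add hb).add hs)
  have hcoercive (w : V) (hw : w ∈ S) :
      E w ^ 2 ≤ 2 * (1 + ctr) * ‖liftedNitscheForm a s L w w‖ := by
    grw [formSeminorm_sq, ← Real.le_norm_self]
    exact add_add_apply_self_le_liftedNitscheForm ha hs.isNonneg b L hctr.le (htrace w hw)
  have hcea : E (u - uh) ≤ (1 + 2 * (1 + ctr) * (4 + 2 * ctr)) * E (u - vh) :=
    cea_seminorm_sub_le E (liftedNitscheForm a s L) (by positivity) (by positivity) hcoercive
      (fun e w _ ↦ abs_liftedNitscheForm_le ha hb hs L hctr.le hNcbound hlift e w)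
      huh hgal hvh
  have hconst : 1 + 2 * (1 + ctr) * (4 + 2 * ctr) ≤ 1 + 4 * (4 + 2 * ctr) * (1 + ctr) := by
    have : 0 ≤ (1 + ctr) * (4 + 2 * ctr) := by positivity
    linarith
  change E (u - uh) ≤ _ * E (u - vh)
  exact hcea.trans (mul_le_mul_of_nonneg_right hconst (apply_nonneg _ _))
end
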